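/- arXiv:2605.31448 — 3 statements merged into one kernel-verified Lean document; each statement's English description precedes it below -/
import Mathlib

section
/- Decoder correctness of the randomized encoding: for every matrix M ∈ F_2^{q×m}, every input x ∈ F_2^m and all mask values r, s, writing (w, z) = RE_M(x; r, s), for every row i ∈ {1,…,q} one has (⊕_{j=1}^m z_{i,j}) ⊕ (⊕_{j=1}^m M_{i,j}·a_{j,i}(w)) = (Mx)_i. Hence the deterministic map sending (w,z) to the vector with i-th coordinate (⊕_j z_{i,j}) ⊕ (⊕_j M_{i,j} a_{j,i}(w)) recovers Mx from RE_M(x; r, s). -/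
open Finset

/-- Boundary-extended horizontal mask: `sBext m s i k` is the 1-based `s_{i,k}`
for `k ∈ {1,…,m-1}`, with the boundary convention `s_{i,0} = s_{i,m} = 0`. -/
def sBext (m : ℕ) {q : ℕ} (s : Fin q → Fin (m - 1) → ZMod 2) (i : Fin q) (k : ℕ) :
    ZMod 2 :=
  if h : 1 ≤ k ∧ k ≤ m - 1 then s i ⟨k - 1, by omega⟩ else 0

/-- `REw x r j i` is the output bit `w_{j+1,i}` (1-based column `j+1`, `w`-index
`i ∈ {0,…,q-1}`): `w_{j,0} = x_j ⊕ r_{j,1}` and `w_{j,i} = r_{j,i} ⊕ r_{j,i+1}`;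
here `r j i` denotes `r_{j+1,i+1}` in the 1-based notation. -/
def REw {m q : ℕ} (x : Fin m → ZMod 2) (r : Fin m → Fin q → ZMod 2) :
    Fin m → Fin q → ZMod 2 :=
  fun j i =>
    (if (i : ℕ) = 0 then x j
      else r j ⟨(i : ℕ) - 1, Nat.lt_of_le_of_lt (Nat.sub_le _ _) i.isLt⟩) + r j i

/-- `REz M r s i j` is the output bit `z_{i+1,j+1}` (1-based):
`z_{i,j} = s_{i,j-1} ⊕ s_{i,j} ⊕ M_{i,j}·r_{j,i}`. -/
def REz {m q : ℕ} (M : Fin q → Fin m → ZMod 2) (r : Fin m → Fin q → ZMod 2)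
    (s : Fin q → Fin (m - 1) → ZMod 2) : Fin q → Fin m → ZMod 2 :=
  fun i j => sBext m s i (j : ℕ) + sBext m s i ((j : ℕ) + 1) + M i j * r j i

/-- `aFun w j i = w_{j,0} ⊕ ⋯ ⊕ w_{j,i}` (0-based `i : Fin q`), i.e. the prefix
parity `a_{j,i+1}` in the 1-based notation of the paper. -/
def aFun {m q : ℕ} (w : Fin m → Fin q → ZMod 2) (j : Fin m) (i : Fin q) : ZMod 2 :=
  ∑ k ∈ Finset.Iic i, w j k

/-!
In characteristic two addition is subtraction, so each column of `w` and the `s`-part of each row of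
`z` consist of differences of consecutive terms of a sequence. Prefix sums of `w` telescope to
`a_{j,i}(w) = x_j + r_{j,i}`. The `s`-part of row `i` of `z` telescopes to the difference of the two
vanishing boundary masks, which leaves the row sum `∑ j, M i j * r j i`; this cancels the masks `r`
in `∑ j, M i j * a_{j,i}(w)`.
-/

section Columns

variable {m q : ℕ} (x : Fin m → ZMod 2) (r : Fin m → Fin q → ZMod 2)

theorem REw_eq_cons_sub_cons (j : Fin m) (k : Fin q) :
    REw x r j k = (Fin.cons (x j) (r j) : Fin (q + 1) → ZMod 2) k.succ -
      (Fin.cons (x j) (r j) : Fin (q + 1) → ZMod 2) k.castSucc := by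
  rw [CharTwo.sub_eq_add, add_comm, Fin.cons_succ, REw]
  rcases k with ⟨_ | k, hk⟩ <;> rfl

theorem aFun_REw (j : Fin m) (i : Fin q) : aFun (REw x r) j i = x j + r j i := by
  simp only [aFun, REw_eq_cons_sub_cons]
  rw [Fin.sum_Iic_sub i, Fin.cons_succ, Fin.cons_zero, CharTwo.sub_eq_add, add_comm]

end Columns

section Rows

variable {m q : ℕ} (s : Fin q → Fin (m - 1) → ZMod 2) (i : Fin q)

theorem sBext_zero : sBext m s i 0 = 0 :=
  dif_neg (by omega)

theorem sBext_self : sBext m s i m = 0 :=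
  dif_neg (by omega)

theorem sum_sBext_add_sBext_succ :
    ∑ j : Fin m, (sBext m s i (j : ℕ) + sBext m s i ((j : ℕ) + 1)) = 0 := by
  calc
    _ = ∑ k ∈ range m, (sBext m s i k - sBext m s i (k + 1)) := by
      simp only [CharTwo.sub_eq_add, sum_range]
    _ = sBext m s i 0 - sBext m s i m := sum_range_sub' _ _
    _ = 0 := by rw [sBext_zero, sBext_self, sub_zero]

theorem sum_REz (M : Fin q → Fin m → ZMod 2) (r : Fin m → Fin q → ZMod 2) :
    ∑ j, REz M r s i j = ∑ j, M i j * r j i := by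
  simp only [REz]
  rw [sum_add_distrib, sum_sBext_add_sBext_succ, zero_add]

end Rows

/-- Decoder correctness of the randomized encoding: for every
matrix `M ∈ F_2^{q×m}`, every input `x` and all masks `r, s`, writing
`(w, z) = RE_M(x; r, s)`, for every row `i` one has
`(⊕_j z_{i,j}) ⊕ (⊕_j M_{i,j}·a_{j,i}(w)) = (Mx)_i`; hence the deterministic
map sending `(w, z)` to the vector with those coordinates recovers `Mx`. -/
theorem decoder_correctness {m q : ℕ} (hm : 1 ≤ m) (hq : 1 ≤ q)
    (M : Fin q → Fin m → ZMod 2) (x : Fin m → ZMod 2)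
    (r : Fin m → Fin q → ZMod 2) (s : Fin q → Fin (m - 1) → ZMod 2) :
    (∀ i : Fin q,
        (∑ j, REz M r s i j) + (∑ j, M i j * aFun (REw x r) j i)
          = ∑ j, M i j * x j) ∧
      (fun i : Fin q =>
          (∑ j, REz M r s i j) + (∑ j, M i j * aFun (REw x r) j i))
        = (fun i : Fin q => ∑ j, M i j * x j) := by
  have decode_row (i : Fin q) :
      (∑ j, REz M r s i j) + (∑ j, M i j * aFun (REw x r) j i) = ∑ j, M i j * x j := by
    calc
      _ = (∑ j, M i j * r j i) + ∑ j, M i j * (x j + r j i) := by simp only [sum_REz, aFun_REw]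
      _ = ∑ j, M i j * x j + ((∑ j, M i j * r j i) + ∑ j, M i j * r j i) := by
        simp only [mul_add, sum_add_distrib, add_left_comm]
      _ = ∑ j, M i j * x j := by rw [CharTwo.add_self_eq_zero, add_zero]
  exact ⟨decode_row, funext decode_row⟩
end

section
/- Perfect privacy of the randomized encoding: fix a matrix M ∈ F_2^{q×m} and let R be uniform on F_2^{mq} and S be uniform on F_2^{q(m−1)}, independent. Then for any two inputs x, x' ∈ F_2^m with Mx = Mx', the distribution of RE_M(x; R, S) equals the distribution of RE_M(x'; R, S). -/
open Finset

/-- The product of two probability mass functions (joint distribution of a pair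
of independent random variables). -/
noncomputable def pmfProd {α β : Type*} (p : PMF α) (p' : PMF β) : PMF (α × β) :=
  p.bind fun a => p'.map fun b => (a, b)

/-!
The encoding is linear in `(x, r, s)`, and every `d` with `M d = 0` extends to some `(d, ρ, σ)` on
which it vanishes: taking `ρ` equal to `d_j` along column `j` gives `w = 0` and contributes
`M_{i,j} d_j` to `z_{i,j}`. Over `F_2` this is cancelled by letting `σ_i` be the partial sums of
row `i` of these products, which are `0` at both ends because `M d = 0`. For `d = x - x'`, the
encoding of `x` with masks `(r + ρ, s + σ)` is thus the encoding of `x'` with masks `(r, s)`, and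
translation by `(ρ, σ)` preserves the uniform distribution.
-/

section

variable {α β γ δ : Type*}

theorem map_equiv_uniformOfFintype [Fintype α] [Nonempty α] [Fintype β] [Nonempty β] (e : α ≃ β) :
    (PMF.uniformOfFintype α).map e = PMF.uniformOfFintype β := by
  classical
  ext b
  simp [PMF.map_apply, ← e.symm_apply_eq, Fintype.card_congr e]

theorem map_add_right_uniformOfFintype [Fintype α] [AddGroup α] (a : α) :
    (PMF.uniformOfFintype α).map (· + a) = PMF.uniformOfFintype α :=
  map_equiv_uniformOfFintype (Equiv.addRight a)

theorem pmfProd_map_map (p : PMF α) (p' : PMF β) (f : α → γ) (g : β → δ) :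
    pmfProd (p.map f) (p'.map g) = (pmfProd p p').map (Prod.map f g) := by
  simp [pmfProd, PMF.map_bind, PMF.bind_map, PMF.map_comp, Function.comp_def]

end

theorem partialSum_last {A : Type*} [AddCommMonoid A] {n : ℕ} (f : Fin n → A) :
    Fin.partialSum f (Fin.last n) = ∑ i, f i := by
  simp [Fin.partialSum, List.take_of_length_le, List.sum_ofFn]

section Encoding

variable {m q : ℕ}

theorem sBext_add (s s' : Fin q → Fin (m - 1) → ZMod 2) (i : Fin q) (k : ℕ) :
    sBext m (s + s') i k = sBext m s i k + sBext m s' i k := by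
  unfold sBext
  split_ifs <;> simp

theorem REw_add (x x' : Fin m → ZMod 2) (r r' : Fin m → Fin q → ZMod 2) :
    REw (x + x') (r + r') = REw x r + REw x' r' := by
  ext j i
  simp only [REw, Pi.add_apply]
  split_ifs <;> ring

theorem REz_add (M : Fin q → Fin m → ZMod 2) (r r' : Fin m → Fin q → ZMod 2)
    (s s' : Fin q → Fin (m - 1) → ZMod 2) :
    REz M (r + r') (s + s') = REz M r s + REz M r' s' := by
  ext i j
  simp only [REz, sBext_add, Pi.add_apply]
  ring

theorem REw_columnwise_const (d : Fin m → ZMod 2) :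
    REw d (fun j (_ : Fin q) => d j) = 0 := by
  ext j i
  simp [REw, CharTwo.add_self_eq_zero]

theorem sBext_restrict_interior (t : Fin q → Fin (m + 1) → ZMod 2) {i : Fin q}
    (h_zero : t i 0 = 0) (h_last : t i (Fin.last m) = 0) (k : Fin (m + 1)) :
    sBext m (fun i (l : Fin (m - 1)) => t i ⟨l + 1, by omega⟩) i k = t i k := by
  unfold sBext
  split_ifs with hk
  · simp [Nat.sub_add_cancel hk.1]
  · obtain rfl | rfl : k = 0 ∨ k = Fin.last m := by
      simp only [Fin.ext_iff, Fin.val_zero, Fin.val_last]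
      omega
    · exact h_zero.symm
    · exact h_last.symm

theorem exists_REz_columnwise_const_eq_zero (M : Fin q → Fin m → ZMod 2) (d : Fin m → ZMod 2)
    (hd : ∀ i, ∑ j, M i j * d j = 0) :
    ∃ s, REz M (fun j _ => d j) s = 0 := by
  let t : Fin q → Fin (m + 1) → ZMod 2 := fun i => Fin.partialSum fun j => M i j * d j
  have t_last (i : Fin q) : t i (Fin.last m) = 0 := (partialSum_last _).trans (hd i)
  have t_succ (i : Fin q) (j : Fin m) : t i j.succ = t i j.castSucc + M i j * d j :=
    Fin.partialSum_succ _ j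
  let s : Fin q → Fin (m - 1) → ZMod 2 := fun i l => t i ⟨l + 1, by omega⟩
  have sBext_s (i : Fin q) (k : Fin (m + 1)) : sBext m s i k = t i k :=
    sBext_restrict_interior t (Fin.partialSum_zero _) (t_last i) k
  refine ⟨s, ?_⟩
  ext i j
  calc
    REz M (fun j _ => d j) s i j = t i j.castSucc + t i j.succ + M i j * d j :=
      congr_arg₂ (· + · + M i j * d j) (sBext_s i j.castSucc) (sBext_s i j.succ)
    _ = (t i j.castSucc + M i j * d j) + (t i j.castSucc + M i j * d j) := by
      rw [t_succ]
      ring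
    _ = 0 := CharTwo.add_self_eq_zero _

end Encoding

/-- Perfect privacy of the randomized encoding: with `R`
uniform on `F_2^{mq}` and `S` uniform on `F_2^{q(m−1)}`, independent, for any
two inputs `x, x'` with `Mx = Mx'` the distribution of `RE_M(x; R, S)` equals
the distribution of `RE_M(x'; R, S)`. -/
theorem perfect_privacy {m q : ℕ} (hm : 1 ≤ m) (hq : 1 ≤ q)
    (M : Fin q → Fin m → ZMod 2) (x x' : Fin m → ZMod 2)
    (hxx : ∀ i : Fin q, ∑ j, M i j * x j = ∑ j, M i j * x' j) :
    (pmfProd (PMF.uniformOfFintype (Fin m → Fin q → ZMod 2))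
          (PMF.uniformOfFintype (Fin q → Fin (m - 1) → ZMod 2))).map
        (fun rs => (REw x rs.1, REz M rs.1 rs.2))
      = (pmfProd (PMF.uniformOfFintype (Fin m → Fin q → ZMod 2))
          (PMF.uniformOfFintype (Fin q → Fin (m - 1) → ZMod 2))).map
        (fun rs => (REw x' rs.1, REz M rs.1 rs.2)) := by
  have hd (i : Fin q) : ∑ j, M i j * (x - x') j = 0 := by
    simp [mul_sub, Finset.sum_sub_distrib, hxx i]
  let ρ : Fin m → Fin q → ZMod 2 := fun j _ => (x - x') j
  obtain ⟨σ, hσ⟩ := exists_REz_columnwise_const_eq_zero M (x - x') hd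
  have hw (r) : REw x (r + ρ) = REw x' r := by
    rw [← add_zero (REw x' r), ← REw_columnwise_const (x - x'), ← REw_add, add_sub_cancel]
  have hz (r s) : REz M (r + ρ) (s + σ) = REz M r s := by
    rw [REz_add, hσ, add_zero]
  conv_lhs =>
    rw [← map_add_right_uniformOfFintype ρ, ← map_add_right_uniformOfFintype σ,
      pmfProd_map_map, PMF.map_comp]
  simp only [Function.comp_def, Prod.map_fst, Prod.map_snd, hw, hz]
end

section
/- Bounded fan-in and bounded fan-out of the randomized encoding: fix a matrix M ∈ F_2^{q×m} and view RE_M as a function of the source vector (x, r, s) ∈ F_2^m × F_2^{mq} × F_2^{q(m−1)}. Then (i) for every output coordinate of RE_M, the set of source coordinates t such that flipping coordinate t of some source vector changes that output coordinate has size at most 3; and (ii) for every source coordinate t, the set of output coordinates that change when coordinate t of some source vector is flipped has size at most 3. -/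
open Finset

/-- The index type of the source coordinates `(x, r, s)` of the randomized
encoding. -/
abbrev SrcIdx (m q : ℕ) := Fin m ⊕ (Fin m × Fin q) ⊕ (Fin q × Fin (m - 1))

/-- The index type of the output coordinates `(w, z)` of the randomized
encoding: `w_{j,i}` for `j ∈ [m]`, `0 ≤ i ≤ q−1`, and `z_{i,j}` for
`i ∈ [q]`, `j ∈ [m]`. -/
abbrev OutIdx (m q : ℕ) := (Fin m × Fin q) ⊕ (Fin q × Fin m)

/-- The randomized encoding viewed as a single function of the source vector. -/
def REfull {m q : ℕ} (M : Fin q → Fin m → ZMod 2)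
    (v : SrcIdx m q → ZMod 2) : OutIdx m q → ZMod 2 :=
  fun o =>
    match o with
    | Sum.inl (j, i) =>
        REw (fun j => v (Sum.inl j)) (fun j i => v (Sum.inr (Sum.inl (j, i)))) j i
    | Sum.inr (i, j) =>
        REz M (fun j i => v (Sum.inr (Sum.inl (j, i))))
          (fun i k => v (Sum.inr (Sum.inr (i, k)))) i j

/-- Flip coordinate `t` of a source vector: add `1 ∈ F_2` to that coordinate
while keeping all other coordinates fixed. -/
def flipAt {ι : Type*} [DecidableEq ι] (v : ι → ZMod 2) (t : ι) : ι → ZMod 2 :=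
  Function.update v t (v t + 1)

/-!
Every output bit is a sum of at most three terms, each reading at most one source bit, which bounds
the fan-in. The terms can moreover be numbered `0, 1, 2` in such a way that no source bit is read by
the `c`-th term of two different output bits. The dependency graph is thus covered by three
matchings, which bounds the fan-out as well.
-/

/-- The position of the mask bit `s_{i,k}` (1-based in `k`) among the source coordinates, `none`
for the boundary bits `s_{i,0} = s_{i,m} = 0`. -/
def maskIdx {m q : ℕ} (i : Fin q) (k : ℕ) : Option (SrcIdx m q) :=
  if h : 1 ≤ k ∧ k ≤ m - 1 then some (Sum.inr (Sum.inr (i, ⟨k - 1, by omega⟩))) else none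

/-- The source coordinate read by the `c`-th summand of an output coordinate, `none` if there is
no such summand. The summand `r j i` is numbered `1` in `REw x r j i` but `2` in `REz M r s i j`,
so that no two outputs read it under the same number. -/
def summandSource {m q : ℕ} : Fin 3 → OutIdx m q → Option (SrcIdx m q)
  | 0, Sum.inl (j, i) =>
      some (if (i : ℕ) = 0 then Sum.inl j else Sum.inr (Sum.inl (j, ⟨i - 1, by omega⟩)))
  | 1, Sum.inl (j, i) => some (Sum.inr (Sum.inl (j, i)))
  | 2, Sum.inl _ => none
  | 0, Sum.inr (i, j) => maskIdx i j
  | 1, Sum.inr (i, j) => maskIdx i (j + 1)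
  | 2, Sum.inr (i, j) => some (Sum.inr (Sum.inl (j, i)))

section Wiring

theorem ncard_le_card_of_forall_exists {α κ : Type*} [Fintype κ] {S : Set α} {R : κ → α → Prop}
    (hcover : ∀ a ∈ S, ∃ c, R c a) (huniq : ∀ c, {a | R c a}.Subsingleton) :
    S.ncard ≤ Fintype.card κ := by
  rw [← Nat.card_coe_set_eq, ← Nat.card_eq_fintype_card]
  choose color hcolor using hcover
  refine Nat.card_le_card_of_injective (fun a : S => color a a.2) fun a b hab => Subtype.ext ?_
  have hb : R (color a a.2) b := by
    rw [show color a a.2 = color b b.2 from hab]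
    exact hcolor b b.2
  exact huniq _ (hcolor a a.2) hb

theorem mem_of_apply_flipAt_ne {ι β : Type*} [DecidableEq ι] {f : (ι → ZMod 2) → β} {s : Set ι}
    (hf : DependsOn f s) {v : ι → ZMod 2} {t : ι} (hne : f (flipAt v t) ≠ f v) : t ∈ s := by
  by_contra ht
  exact hne (hf fun i hi => Function.update_of_ne (ne_of_mem_of_not_mem hi ht) _ _)

variable {ι ω κ β : Type*} [DecidableEq ι] [Fintype κ] {f : (ι → ZMod 2) → ω → β}
  {source : κ → ω → Option ι}

theorem ncard_fanIn_le_card (hf : ∀ o, DependsOn (f · o) {t | ∃ c, source c o = some t}) (o : ω) :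
    {t | ∃ v, f (flipAt v t) o ≠ f v o}.ncard ≤ Fintype.card κ :=
  ncard_le_card_of_forall_exists (fun _ ⟨_, hv⟩ => mem_of_apply_flipAt_ne (hf o) hv)
    fun _ _ ha _ hb => Option.some_injective _ (ha.symm.trans hb)

theorem ncard_fanOut_le_card (hf : ∀ o, DependsOn (f · o) {t | ∃ c, source c o = some t})
    (hinj : ∀ c, Relator.LeftUnique fun o t => source c o = some t) (t : ι) :
    {o | ∃ v, f (flipAt v t) o ≠ f v o}.ncard ≤ Fintype.card κ :=
  ncard_le_card_of_forall_exists (fun o ⟨_, hv⟩ => mem_of_apply_flipAt_ne (hf o) hv)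
    fun c _ ho _ ho' => hinj c ho ho'

end Wiring

section Encoding

variable {m q : ℕ}

theorem sBext_eq_elim_maskIdx (v : SrcIdx m q → ZMod 2) (i : Fin q) (k : ℕ) :
    sBext m (fun i k => v (Sum.inr (Sum.inr (i, k)))) i k = (maskIdx i k).elim 0 v := by
  unfold sBext maskIdx
  split_ifs <;> rfl

theorem maskIdx_eq_some_iff {i : Fin q} {k : ℕ} {t : SrcIdx m q} :
    maskIdx i k = some t ↔ ∃ l : Fin (m - 1), k = l + 1 ∧ t = Sum.inr (Sum.inr (i, l)) := by
  unfold maskIdx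
  grind

theorem leftUnique_summandSource (c : Fin 3) :
    Relator.LeftUnique fun (o : OutIdx m q) t => summandSource c o = some t := by
  rintro (⟨j, i⟩ | ⟨i, j⟩) (⟨j', i'⟩ | ⟨i', j'⟩) t h h' <;> fin_cases c <;>
    grind [summandSource, maskIdx_eq_some_iff]

theorem dependsOn_REfull (M : Fin q → Fin m → ZMod 2) (o : OutIdx m q) :
    DependsOn (REfull M · o) {t | ∃ c, summandSource c o = some t} := by
  intro v v' hagree
  have helim (c : Fin 3) : (summandSource c o).elim 0 v = (summandSource c o).elim 0 v' := by
    cases hc : summandSource c o with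
    | none => rfl
    | some t => exact hagree t ⟨c, hc⟩
  rcases o with ⟨j, i⟩ | ⟨i, j⟩
  · simp only [REfull, REw]
    split_ifs with hi <;>
      simpa [summandSource, hi] using congrArg₂ (· + ·) (helim 0) (helim 1)
  · simp only [REfull, REz, sBext_eq_elim_maskIdx]
    exact congrArg₂ (· + ·) (congrArg₂ (· + ·) (helim 0) (helim 1))
      (congrArg (M i j * ·) (helim 2))

end Encoding

/-- Bounded fan-in and bounded fan-out of the randomized
encoding: (i) every output coordinate depends on at most 3 source coordinates,
and (ii) every source coordinate influences at most 3 output coordinates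
(dependence being measured by whether flipping the coordinate of some source
vector changes the value). -/
theorem bounded_fanin_fanout {m q : ℕ} (hm : 1 ≤ m) (hq : 1 ≤ q)
    (M : Fin q → Fin m → ZMod 2) :
    (∀ o : OutIdx m q,
        Set.ncard {t : SrcIdx m q |
          ∃ v : SrcIdx m q → ZMod 2, REfull M (flipAt v t) o ≠ REfull M v o} ≤ 3) ∧
      (∀ t : SrcIdx m q,
        Set.ncard {o : OutIdx m q |
          ∃ v : SrcIdx m q → ZMod 2, REfull M (flipAt v t) o ≠ REfull M v o} ≤ 3) := by
  have hdep := dependsOn_REfull M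
  exact ⟨ncard_fanIn_le_card hdep, ncard_fanOut_le_card hdep leftUnique_summandSource⟩
end
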